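/- Let k be a field, g a Lie algebra over k, and (λ, D) a twisted derivation of g. Then the bracket on g × k defined by [(g,a),(h,b)] := ([g,h] + a·D(h) − b·D(g), a·λ(h) − b·λ(g)) is a Lie algebra bracket; the resulting Lie algebra is denoted g ⋈_{(λ,D)} k and contains g ≅ g × {0} as a Lie subalgebra. -/

import Mathlib

def IsLieBracket {L : Type*} [AddCommGroup L] (B : L → L → L) : Prop :=
  (∀ p, B p p = 0) ∧ ∀ p q r, B p (B q r) + B q (B r p) + B r (B p q) = 0

/-- The bracket of `G ⋈_{(λ,D)} k` on `G × k`: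
`[(g,a),(h,b)] = ([g,h] + a·D(h) - b·D(g), a·λ(h) - b·λ(g))`. -/
def twDerBracket {k G : Type*} [Field k] [LieRing G] [LieAlgebra k G]
    (lam : G →ₗ[k] k) (D : G →ₗ[k] G) : G × k → G × k → G × k :=
  fun u w =>
    (⁅u.1, w.1⁆ + u.2 • D w.1 - w.2 • D u.1, u.2 * lam w.1 - w.2 * lam u.1)

/-!
The bracket is bilinear and alternating, so its Jacobiator is trilinear, cyclically invariant and
vanishes as soon as two arguments agree. As `G × k` is spanned by `G × {0}` and `e = (0, 1)`, it
suffices to evaluate the Jacobiator on `(g, h, l)` and on `(g, h, e)` with `g, h, l` in `G`. The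
first value is the Jacobi identity of `G`; the second is the defect of `(λ, D)` from being a twisted
derivation.
-/

section Jacobiator

variable {R M : Type*} [CommRing R] [AddCommGroup M] [Module R M]

/-- The Jacobiator of a bilinear product `B`, the cyclic sum whose vanishing is the Jacobi identity,
with the same order of arguments as in `IsLieBracket`. -/
def jacobiator (B : M →ₗ[R] M →ₗ[R] M) (p q r : M) : M :=
  B p (B q r) + B q (B r p) + B r (B p q)

variable {B : M →ₗ[R] M →ₗ[R] M}

theorem jacobiator_rotate (p q r : M) : jacobiator B p q r = jacobiator B q r p := by
  simp only [jacobiator]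
  abel

theorem jacobiator_add_left (p p' q r : M) :
    jacobiator B (p + p') q r = jacobiator B p q r + jacobiator B p' q r := by
  simp only [jacobiator, map_add, LinearMap.add_apply]
  abel

theorem jacobiator_smul_left (c : R) (p q r : M) :
    jacobiator B (c • p) q r = c • jacobiator B p q r := by
  simp only [jacobiator, map_smul, LinearMap.smul_apply, smul_add]

theorem jacobiator_self_left (hB : B.IsAlt) (p q : M) : jacobiator B p p q = 0 := by
  rw [jacobiator, hB p, map_zero, add_zero, ← map_add, ← hB.neg p q, add_neg_cancel, map_zero]

variable {N : Submodule R M} {e : M}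

theorem jacobiator_eq_zero_of_sup_span_left (hNe : N ⊔ Submodule.span R {e} = ⊤) {q r : M}
    (hN : ∀ x ∈ N, jacobiator B x q r = 0) (he : jacobiator B e q r = 0) (p : M) :
    jacobiator B p q r = 0 := by
  obtain ⟨x, hx, y, hy, rfl⟩ := Submodule.mem_sup.mp (hNe ▸ Submodule.mem_top : p ∈ N ⊔ _)
  obtain ⟨c, rfl⟩ := Submodule.mem_span_singleton.mp hy
  rw [jacobiator_add_left, jacobiator_smul_left, hN x hx, he, smul_zero, add_zero]

theorem jacobiator_eq_zero_of_sup_span (hB : B.IsAlt) (hNe : N ⊔ Submodule.span R {e} = ⊤)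
    (hN : ∀ x ∈ N, ∀ y ∈ N, ∀ z ∈ N, jacobiator B x y z = 0)
    (he : ∀ x ∈ N, ∀ y ∈ N, jacobiator B x y e = 0) (p q r : M) :
    jacobiator B p q r = 0 := by
  have he_left (q r : M) : jacobiator B e q r = 0 := by
    rw [jacobiator_rotate]
    refine jacobiator_eq_zero_of_sup_span_left hNe (fun x hx ↦ ?_) ?_ q
    · rw [jacobiator_rotate]
      refine jacobiator_eq_zero_of_sup_span_left hNe (fun y hy ↦ ?_) ?_ r
      · rw [jacobiator_rotate, jacobiator_rotate, he x hx y hy]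
      · exact jacobiator_self_left hB e x
    · rw [← jacobiator_rotate, jacobiator_self_left hB]
  refine jacobiator_eq_zero_of_sup_span_left hNe (fun x hx ↦ ?_) (he_left q r) p
  rw [jacobiator_rotate]
  refine jacobiator_eq_zero_of_sup_span_left hNe (fun y hy ↦ ?_) (he_left r x) q
  rw [jacobiator_rotate]
  exact jacobiator_eq_zero_of_sup_span_left hNe (fun z hz ↦ hN z hz x hx y hy) (he_left x y) r

end Jacobiator

theorem range_inl_sup_span_zero_one (R M : Type*) [Semiring R] [AddCommMonoid M] [Module R M] :
    LinearMap.range (LinearMap.inl R M R) ⊔ Submodule.span R {((0, 1) : M × R)} = ⊤ := by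
  refine eq_top_iff.mpr fun ⟨x, a⟩ _ ↦ Submodule.mem_sup.mpr
    ⟨(x, 0), ⟨x, rfl⟩, a • (0, 1), Submodule.mem_span_singleton.mpr ⟨a, rfl⟩, ?_⟩
  simp

section TwistedDerivation

variable {R L : Type*} [CommRing R] [LieRing L] [LieAlgebra R L]

/-- `(lam, D)` is a twisted derivation of the Lie algebra `L`: `lam` is a character and `D` obeys
the Leibniz rule up to a correction by `lam`. -/
structure IsTwistedDerivation (lam : L →ₗ[R] R) (D : L →ₗ[R] L) : Prop where
  lam_lie (g h : L) : lam ⁅g, h⁆ = 0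
  D_lie (g h : L) : D ⁅g, h⁆ = ⁅D g, h⁆ + ⁅g, D h⁆ + lam g • D h - lam h • D g

/-- The bracket of `L ⋈_{(λ,D)} R` as a bilinear map, over any commutative ring `R`; over a field
its values are those of `twDerBracket`. -/
def twistedBracket (lam : L →ₗ[R] R) (D : L →ₗ[R] L) : L × R →ₗ[R] L × R →ₗ[R] L × R :=
  LinearMap.mk₂ R
    (fun u w ↦ (⁅u.1, w.1⁆ + u.2 • D w.1 - w.2 • D u.1, u.2 * lam w.1 - w.2 * lam u.1))
    (fun u u' w ↦ by
      ext
      · simp only [Prod.fst_add, Prod.snd_add, add_lie, map_add]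
        module
      · simp only [Prod.fst_add, Prod.snd_add, map_add]
        ring)
    (fun c u w ↦ by
      ext
      · simp only [Prod.smul_fst, Prod.smul_snd, smul_lie, map_smul, smul_eq_mul]
        module
      · simp only [Prod.smul_fst, Prod.smul_snd, map_smul, smul_eq_mul]
        ring)
    (fun u w w' ↦ by
      ext
      · simp only [Prod.fst_add, Prod.snd_add, lie_add, map_add]
        module
      · simp only [Prod.fst_add, Prod.snd_add, map_add]
        ring)
    (fun c u w ↦ by
      ext
      · simp only [Prod.smul_fst, Prod.smul_snd, lie_smul, map_smul, smul_eq_mul]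
        module
      · simp only [Prod.smul_fst, Prod.smul_snd, map_smul, smul_eq_mul]
        ring)

variable (lam : L →ₗ[R] R) (D : L →ₗ[R] L)

theorem twistedBracket_mk_mk (g h : L) (a b : R) :
    twistedBracket lam D (g, a) (h, b) = (⁅g, h⁆ + a • D h - b • D g, a * lam h - b * lam g) :=
  rfl

theorem twistedBracket_isAlt : (twistedBracket lam D).IsAlt := by
  rintro ⟨g, a⟩
  simp [twistedBracket_mk_mk]

theorem twistedBracket_mk_zero_mk_zero (g h : L) :
    twistedBracket lam D (g, 0) (h, 0) = (⁅g, h⁆, 0) := by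
  simp [twistedBracket_mk_mk]

theorem twistedBracket_mk_zero_zero_one (g : L) :
    twistedBracket lam D (g, 0) (0, 1) = (-D g, -lam g) := by
  simp [twistedBracket_mk_mk]

theorem twistedBracket_zero_one_mk_zero (g : L) :
    twistedBracket lam D (0, 1) (g, 0) = (D g, lam g) := by
  simp [twistedBracket_mk_mk]

theorem jacobiator_twistedBracket_mk_zero (g h l : L) :
    jacobiator (twistedBracket lam D) (g, 0) (h, 0) (l, 0) = 0 := by
  simp [jacobiator, twistedBracket_mk_zero_mk_zero, lie_jacobi]

theorem jacobiator_twistedBracket_zero_one (g h : L) :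
    jacobiator (twistedBracket lam D) (g, 0) (h, 0) (0, 1) =
      (D ⁅g, h⁆ - (⁅D g, h⁆ + ⁅g, D h⁆ + lam g • D h - lam h • D g), lam ⁅g, h⁆) := by
  have skew : ⁅D g, h⁆ = -⁅h, D g⁆ := (lie_skew _ _).symm
  rw [jacobiator, twistedBracket_mk_zero_zero_one, twistedBracket_zero_one_mk_zero,
    twistedBracket_mk_zero_mk_zero, twistedBracket_zero_one_mk_zero, twistedBracket_mk_mk,
    twistedBracket_mk_mk, skew, lie_neg]
  ext
  · simp only [Prod.fst_add]
    module
  · simp only [Prod.snd_add]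
    ring

variable {lam D}

theorem IsTwistedDerivation.jacobiator_twistedBracket (hlD : IsTwistedDerivation lam D)
    (p q r : L × R) : jacobiator (twistedBracket lam D) p q r = 0 := by
  refine jacobiator_eq_zero_of_sup_span (twistedBracket_isAlt lam D)
    (range_inl_sup_span_zero_one R L) ?_ ?_ p q r
  · rintro _ ⟨g, rfl⟩ _ ⟨h, rfl⟩ _ ⟨l, rfl⟩
    exact jacobiator_twistedBracket_mk_zero lam D g h l
  · rintro _ ⟨g, rfl⟩ _ ⟨h, rfl⟩
    simp only [LinearMap.inl_apply, jacobiator_twistedBracket_zero_one, ← hlD.D_lie,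
      hlD.lam_lie, sub_self, Prod.mk_zero_zero]

theorem twDerBracket_isLieBracket_general (hlD : IsTwistedDerivation lam D) :
    IsLieBracket (fun u w ↦ twistedBracket lam D u w) ∧
    (∀ g h : L, twistedBracket lam D (g, 0) (h, 0) = (⁅g, h⁆, 0)) ∧
    Function.Injective (fun g : L ↦ ((g, 0) : L × R)) :=
  ⟨⟨twistedBracket_isAlt lam D, hlD.jacobiator_twistedBracket⟩,
    twistedBracket_mk_zero_mk_zero lam D, Prod.mk_left_injective 0⟩

end TwistedDerivation

/-- Proposition 4.4: for a twisted derivation `(λ, D)` of `G`, the bracket of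
`G ⋈_{(λ,D)} k` is a Lie algebra bracket, and `G ≅ G × {0}` is a Lie subalgebra. -/
theorem twDerBracket_isLieBracket {k G : Type*} [Field k] [LieRing G] [LieAlgebra k G]
    (lam : G →ₗ[k] k) (D : G →ₗ[k] G)
    (hlam : ∀ g h : G, lam ⁅g, h⁆ = 0)
    (hD : ∀ g h : G, D ⁅g, h⁆ = ⁅D g, h⁆ + ⁅g, D h⁆ + lam g • D h - lam h • D g) :
    IsLieBracket (twDerBracket lam D) ∧
    (∀ g h : G, twDerBracket lam D (g, 0) (h, 0) = (⁅g, h⁆, 0)) ∧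
    Function.Injective (fun g : G => ((g, 0) : G × k)) := by
  exact twDerBracket_isLieBracket_general ⟨hlam, hD⟩
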